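/- For all integers a ≥ 2 and q > 4a² log a, the sum choice number of the complete bipartite graph satisfies χ_sc(K_{a,q}) ≥ 2q + 0.06·a·√(q·log a). -/

import Mathlib

/-!
Let `f` be sufficient for `K_{a,q}`, and write `s = √(q log a)`. Three obstructions are used.

* Every `f v` is positive (`Choosable.pos`).
* The `q₁` vertices of `Q` with `f = 1` can forbid any `q₁` colors, so `q₁ < f v` for every `v ∈ A`
  (`Choosable.card_one_lt`).
* If at least `k b²` vertices of `Q` have `f ≤ 2`, then fewer than `2 ^ k` vertices of `A` have
  `f ≤ k b` (`Choosable.card_small_lt`). Otherwise, take `k` disjoint complete bipartite graphs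
  `K_{b,b}` on the colors, use their `k b²` edges as lists on `Q`, and give `2 ^ k` vertices of `A`
  the unions of one side of each `K_{b,b}`, one for each of the `2 ^ k` choices of sides. The colors
  used on `A` contain no edge, so they avoid a whole side of each `K_{b,b}`; the list consisting of
  those avoided sides has no color left.

With `q₃` the number of vertices of `Q` with `f ≥ 3`, the sum of `f` over `Q` is at least
`2q - q₁ + q₃`, and the loss `q₁` is paid for by a single vertex of `A`. Take `k` with
`2 (2 ^ k - 1) ≤ a < 2 ^ (k + 2)` and `b = ⌈0.12 s / k⌉`. Then `k b² ≤ 0.9 q`, so either `q₃ ≥ 0.1 q`,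
which is more than `0.06 a s`, or at least `a / 2` further vertices of `A` have `f > k b ≥ 0.12 s`.
-/

open SimpleGraph Finset

/-- A graph `G` is `f`-choosable (i.e. `f` is *sufficient*) if for every assignment of
finite lists of colors with `|L v| = f v` there is a proper coloring choosing colors
from the lists. -/
def Choosable {V : Type*} (G : SimpleGraph V) (f : V → ℕ) : Prop :=
  ∀ L : V → Finset ℕ, (∀ v, (L v).card = f v) →
    ∃ c : V → ℕ, (∀ v, c v ∈ L v) ∧ ∀ u v, G.Adj u v → c u ≠ c v

/-- The sum choice number of a finite graph. -/
noncomputable def sumChoice {V : Type*} [Fintype V] (G : SimpleGraph V) : ℕ :=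
  sInf {n : ℕ | ∃ f : V → ℕ, Choosable G f ∧ ∑ v, f v = n}

/-- For a sufficient `f`, color sets at least as large as `f`, prescribed only on a set `P` of
vertices and taken in any countably infinite color type, admit a proper coloring. -/
lemma Choosable.exists_coloring {V C : Type*} [Infinite C] [Countable C] {G : SimpleGraph V}
    {f : V → ℕ} (h : Choosable G f) (P : V → Prop) (T : V → Finset C)
    (hT : ∀ v, P v → f v ≤ (T v).card) :
    ∃ c : V → C, (∀ v, P v → c v ∈ T v) ∧ ∀ u v, G.Adj u v → c u ≠ c v := by
  classical
  obtain ⟨e, he⟩ := exists_injective_nat C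
  have hL : ∀ v, ∃ S : Finset C, (P v → S ⊆ T v) ∧ S.card = f v := by
    intro v
    by_cases hv : P v
    · obtain ⟨S, hS, hc⟩ := Finset.exists_subset_card_eq (hT v hv)
      exact ⟨S, fun _ => hS, hc⟩
    · obtain ⟨S, hS⟩ := Infinite.exists_subset_card_eq C (f v)
      exact ⟨S, fun h => absurd h hv, hS⟩
  choose S hS hSc using hL
  obtain ⟨c, hc, hadj⟩ := h (fun v => (S v).image e)
    (fun v => by rw [Finset.card_image_of_injective _ he, hSc])
  have hc' : ∀ v, ∃ x ∈ S v, e x = c v := fun v => by simpa using hc v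
  choose d hd hde using hc'
  refine ⟨d, fun v hv => hS v hv (hd v), fun u v huv hEq => hadj u v huv ?_⟩
  rw [← hde, ← hde, hEq]

lemma Choosable.pos {V : Type*} {G : SimpleGraph V} {f : V → ℕ} (h : Choosable G f) (v : V) :
    1 ≤ f v := by
  by_contra hv
  obtain ⟨c, hc, -⟩ := h.exists_coloring (fun u => u = v) (fun _ => (∅ : Finset ℕ))
    (by rintro _ rfl; simp; omega)
  simpa using hc v rfl

lemma choosable_const_card {V : Type*} [Fintype V] (G : SimpleGraph V) :
    Choosable G (fun _ => Fintype.card V) := by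
  classical
  intro L hL
  obtain ⟨c, hinj, hc⟩ := (Finset.all_card_le_biUnion_card_iff_exists_injective L).1 (by
    intro s
    rcases s.eq_empty_or_nonempty with rfl | ⟨v, hv⟩
    · simp
    · calc s.card ≤ Fintype.card V := Finset.card_le_univ s
        _ = (L v).card := (hL v).symm
        _ ≤ _ := Finset.card_le_card (Finset.subset_biUnion_of_mem L hv))
  exact ⟨c, hc, fun u v huv hEq => huv.ne (hinj hEq)⟩

/-- A map from a finite set onto a nonempty finite type of at most its cardinality. -/
lemma exists_surj_of_card_le {α β : Type*} [Fintype β] [Nonempty β] (S : Finset α)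
    (h : Fintype.card β ≤ S.card) : ∃ g : α → β, ∀ y, ∃ x ∈ S, g x = y := by
  classical
  obtain ⟨e⟩ := Function.Embedding.nonempty_of_card_le (α := β) (β := S) (by simpa using h)
  refine ⟨fun x => Function.invFun (fun y => (e y : α)) x, fun y => ⟨e y, (e y).2, ?_⟩⟩
  exact Function.leftInverse_invFun (fun a b hab => e.injective (Subtype.ext hab)) y

lemma Choosable.card_one_lt {a q : ℕ} {f : Fin a ⊕ Fin q → ℕ}
    (h : Choosable (completeBipartiteGraph (Fin a) (Fin q)) f) (v : Fin a) :
    (univ.filter fun u : Fin q => f (.inr u) = 1).card < f (.inl v) := by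
  by_contra! hle
  have : Nonempty (Fin (f (.inl v))) := ⟨⟨0, h.pos _⟩⟩
  obtain ⟨g, hg⟩ := exists_surj_of_card_le (β := Fin (f (.inl v))) _ (by simpa using hle)
  obtain ⟨c, hc, hadj⟩ := h.exists_coloring
    (fun x => x = .inl v ∨ ∃ u, x = .inr u ∧ f x = 1)
    (Sum.elim (fun _ => range (f (.inl v))) (fun u => {(g u : ℕ)}))
    (by rintro x (rfl | ⟨u, rfl, hu⟩) <;> simp [*])
  have h1 : c (.inl v) < f (.inl v) := by simpa using hc (.inl v) (.inl rfl)
  obtain ⟨u, hu, hgu⟩ := hg ⟨_, h1⟩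
  have h2 := hc (.inr u) (.inr ⟨u, rfl, by simpa using hu⟩)
  simp [hgu] at h2
  exact hadj (.inl v) (.inr u) (by simp) h2.symm

/-- Colors are triples: a copy of `K_{b,b}`, one of its two sides, and a vertex in that side. -/
lemma Choosable.card_small_lt {a q : ℕ} {f : Fin a ⊕ Fin q → ℕ}
    (h : Choosable (completeBipartiteGraph (Fin a) (Fin q)) f) (k b : ℕ) (hk : 1 ≤ k) (hb : 1 ≤ b)
    (hq : k * b ^ 2 ≤ (univ.filter fun u : Fin q => f (.inr u) ≤ 2).card) :
    (univ.filter fun v : Fin a => f (.inl v) ≤ k * b).card < 2 ^ k := by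
  classical
  by_contra! hle
  have : Nonempty (Fin k) := ⟨⟨0, hk⟩⟩
  have : Nonempty (Fin b) := ⟨⟨0, hb⟩⟩
  obtain ⟨g, hg⟩ := exists_surj_of_card_le (β := Fin k × Fin b × Fin b) _
    (by simpa [sq] using hq)
  obtain ⟨ε, hε⟩ := exists_surj_of_card_le (β := Fin k → Bool) _ (by simpa using hle)
  let T : Fin a ⊕ Fin q → Finset (ℕ × Bool × ℕ) := Sum.elim
    (fun v => (univ : Finset (Fin k × Fin b)).image fun p => ((p.1 : ℕ), ε v p.1, (p.2 : ℕ)))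
    (fun u => {(((g u).1 : ℕ), false, ((g u).2.1 : ℕ)), (((g u).1 : ℕ), true, ((g u).2.2 : ℕ))})
  obtain ⟨c, hc, hadj⟩ := h.exists_coloring
    (fun x => (∃ v, x = .inl v ∧ f x ≤ k * b) ∨ ∃ u, x = .inr u ∧ f x ≤ 2) T (by
      rintro x (⟨v, rfl, hv⟩ | ⟨u, rfl, hu⟩)
      · refine hv.trans (le_of_eq ?_)
        simp only [T, Sum.elim_inl]
        rw [Finset.card_image_of_injective]
        · simp
        · rintro ⟨i, j⟩ ⟨i', j'⟩ hij
          simp only [Prod.mk.injEq] at hij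
          exact Prod.ext (Fin.ext hij.1) (Fin.ext hij.2.2)
      · refine hu.trans (le_of_eq ?_)
        simp only [T, Sum.elim_inr]
        rw [Finset.card_pair]
        simp)
  -- In each copy of `K_{b,b}`, some side is avoided by the colors used on the left.
  have side : ∀ i : Fin k, ∃ β : Bool, ∀ v : Fin a, ∀ j : Fin b,
      c (.inl v) ≠ ((i : ℕ), β, (j : ℕ)) := by
    intro i
    by_contra! hcon
    obtain ⟨v₀, j₀, h₀⟩ := hcon false
    obtain ⟨v₁, j₁, h₁⟩ := hcon true
    obtain ⟨u, hu, hgu⟩ := hg (i, j₀, j₁)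
    have hcu := hc (.inr u) (.inr ⟨u, rfl, by simpa using hu⟩)
    simp only [T, Sum.elim_inr, hgu, mem_insert, mem_singleton] at hcu
    rcases hcu with hcu | hcu
    · exact hadj (.inl v₀) (.inr u) (by simp) (h₀.trans hcu.symm)
    · exact hadj (.inl v₁) (.inr u) (by simp) (h₁.trans hcu.symm)
  choose β hβ using side
  obtain ⟨v, hv, hvβ⟩ := hε β
  have hcv := hc (.inl v) (.inl ⟨v, rfl, by simpa using hv⟩)
  simp only [T, Sum.elim_inl, mem_image, mem_univ, true_and, hvβ] at hcv
  obtain ⟨⟨i, j⟩, hij⟩ := hcv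
  exact hβ i v j hij.symm

/-- The counting step: if `Q` has fewer than `k b²` vertices with `f ≤ 2`, then `q₃ > q - k b²`, which
gives the first alternative; otherwise `f > k b` holds on at least `a + 1 - 2 ^ k` vertices of `A`
besides the one that offsets `q₁`. -/
lemma Choosable.sum_ge {a q : ℕ} {f : Fin a ⊕ Fin q → ℕ} (ha : 1 ≤ a)
    (h : Choosable (completeBipartiteGraph (Fin a) (Fin q)) f) (k b : ℕ) (hk : 1 ≤ k) (hb : 1 ≤ b) :
    3 * q ≤ ∑ x, f x + k * b ^ 2 ∨ 2 * q + (a + 1 - 2 ^ k) * (k * b) ≤ ∑ x, f x := by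
  classical
  rw [Fintype.sum_sum_type]
  set q₁ := (univ.filter fun u : Fin q => f (.inr u) = 1).card with hq₁
  set q₃ := (univ.filter fun u : Fin q => ¬ f (.inr u) ≤ 2).card with hq₃
  set q₂ := (univ.filter fun u : Fin q => f (.inr u) ≤ 2).card with hq₂
  have hQ : 2 * q + q₃ ≤ ∑ u : Fin q, f (.inr u) + q₁ := by
    have : ∑ u : Fin q, (2 + if ¬ f (.inr u) ≤ 2 then 1 else 0)
        ≤ ∑ u : Fin q, (f (.inr u) + if f (.inr u) = 1 then 1 else 0) := by
      refine Finset.sum_le_sum fun u _ => ?_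
      have := h.pos (.inr u)
      split_ifs <;> omega
    rw [Finset.sum_add_distrib, Finset.sum_add_distrib, ← Finset.card_filter,
      ← Finset.card_filter] at this
    simp only [sum_const, card_univ, Fintype.card_fin, smul_eq_mul] at this
    omega
  have h23 : q₂ + q₃ = q := by
    have := Finset.card_filter_add_card_filter_not (s := (univ : Finset (Fin q)))
      (fun u => f (.inr u) ≤ 2)
    rwa [card_univ, Fintype.card_fin] at this
  rcases lt_or_ge q₂ (k * b ^ 2) with hlt | hge
  · left
    have h1 := h.card_one_lt ⟨0, ha⟩
    have h2 := Finset.single_le_sum (f := fun v : Fin a => f (.inl v)) (fun _ _ => Nat.zero_le _)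
      (mem_univ ⟨0, ha⟩)
    omega
  · right
    have hs := h.card_small_lt k b hk hb hge
    obtain ⟨v₀, hv₀⟩ : ∃ v₀ : Fin a, a + 1 - 2 ^ k ≤
        ((univ.filter fun v : Fin a => ¬ f (.inl v) ≤ k * b).erase v₀).card := by
      have hc := Finset.card_filter_add_card_filter_not (s := (univ : Finset (Fin a)))
        (fun v => f (.inl v) ≤ k * b)
      simp only [card_univ, Fintype.card_fin] at hc
      rcases (univ.filter fun v : Fin a => f (.inl v) ≤ k * b).eq_empty_or_nonempty with he | ⟨v, hv⟩
      · refine ⟨⟨0, ha⟩, ?_⟩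
        have h1 := Finset.pred_card_le_card_erase (a := (⟨0, ha⟩ : Fin a))
          (s := univ.filter fun v : Fin a => ¬ f (.inl v) ≤ k * b)
        have h2 : 2 ≤ 2 ^ k := Nat.le_self_pow (by omega) 2
        rw [he, card_empty] at hc
        omega
      · refine ⟨v, ?_⟩
        rw [Finset.erase_eq_of_notMem (by simpa using hv)]
        omega
    have h1 := h.card_one_lt v₀
    have hA : f (.inl v₀) + (a + 1 - 2 ^ k) * (k * b) ≤ ∑ v : Fin a, f (.inl v) := by
      rw [← Finset.add_sum_erase _ _ (mem_univ v₀)]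
      gcongr
      calc (a + 1 - 2 ^ k) * (k * b)
          ≤ ((univ.filter fun v : Fin a => ¬ f (.inl v) ≤ k * b).erase v₀).card * (k * b) := by
            gcongr
        _ ≤ ∑ v ∈ (univ.filter fun v : Fin a => ¬ f (.inl v) ≤ k * b).erase v₀, f (.inl v) := by
            rw [← smul_eq_mul]
            refine Finset.card_nsmul_le_sum _ _ _ fun v hv => ?_
            simp only [mem_erase, mem_filter] at hv
            omega
        _ ≤ _ := Finset.sum_le_sum_of_subset (Finset.erase_subset_erase _ (filter_subset _ _))
    omega

lemma exists_exponent {a : ℕ} (ha : 2 ≤ a) :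
    ∃ k : ℕ, 1 ≤ k ∧ 2 * 2 ^ k ≤ a + 2 ∧ a < 2 ^ (k + 2) := by
  have h1 := Nat.pow_log_le_self 2 (show a ≠ 0 by omega)
  have h2 := Nat.lt_pow_succ_log_self (b := 2) (by norm_num) a
  have h3 : 1 ≤ Nat.log 2 a := Nat.log_pos (by norm_num) ha
  generalize Nat.log 2 a = l at *
  rcases h3.eq_or_lt with rfl | h4
  · exact ⟨1, le_rfl, by omega, h2.trans (by norm_num)⟩
  · obtain ⟨k, rfl⟩ : ∃ k, l = k + 1 := ⟨l - 1, by omega⟩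
    refine ⟨k, by omega, ?_, h2⟩
    rw [pow_succ] at h1
    omega

/-- Theorem 6 (lower bound): for `a ≥ 2` and `q > 4a² log a`,
`χ_sc(K_{a,q}) ≥ 2q + 0.06·a·√(q·log a)`. -/
theorem sumChoice_completeBipartite_lower (a q : ℕ) (ha : 2 ≤ a)
    (hq : 4 * (a : ℝ) ^ 2 * Real.log a < (q : ℝ)) :
    2 * (q : ℝ) + 0.06 * (a : ℝ) * Real.sqrt (q * Real.log a)
      ≤ (sumChoice (completeBipartiteGraph (Fin a) (Fin q)) : ℝ) := by
  obtain ⟨f, hf, hsum⟩ : sumChoice (completeBipartiteGraph (Fin a) (Fin q)) ∈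
      {n : ℕ | ∃ f : Fin a ⊕ Fin q → ℕ,
        Choosable (completeBipartiteGraph (Fin a) (Fin q)) f ∧ ∑ v, f v = n} :=
    Nat.sInf_mem ⟨_, _, choosable_const_card _, rfl⟩
  rw [← hsum]
  obtain ⟨k, hk, hka, hak⟩ := exists_exponent ha
  have haR : (2 : ℝ) ≤ a := by exact_mod_cast ha
  have hkR : (1 : ℝ) ≤ k := by exact_mod_cast hk
  have hl2 : Real.log 2 ≤ Real.log a := Real.log_le_log (by norm_num) haR
  have hl2' := Real.log_two_gt_d9
  have hl2'' := Real.log_two_lt_d9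
  have hlog : Real.log a ≤ 2.1 * k := by
    have h1 : Real.log a ≤ Real.log ((2 : ℝ) ^ (k + 2)) :=
      Real.log_le_log (by linarith) (by exact_mod_cast hak.le)
    rw [Real.log_pow] at h1
    push_cast at h1
    nlinarith
  have hq0 : (0 : ℝ) < q := lt_of_le_of_lt (by positivity) hq
  set s := Real.sqrt (q * Real.log a) with hs
  have hs2 : s ^ 2 = q * Real.log a := Real.sq_sqrt (by positivity)
  have hspos : 0 < s := Real.sqrt_pos.2 (mul_pos hq0 (by linarith))
  have has : a * s ≤ q / 2 := by
    refine abs_le_of_sq_le_sq' ?_ (by positivity) |>.2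
    rw [mul_pow, hs2]
    nlinarith
  have hsq : s ≤ q / 4 := by nlinarith
  have hkq : (k : ℝ) ≤ q / 10 := by
    have h1 : 2 * k ≤ a := by
      have := k.lt_two_pow_self
      omega
    have h2 : 2 * (k : ℝ) ≤ a := by exact_mod_cast h1
    have h3 : (a : ℝ) ^ 2 * 0.69 ≤ (a : ℝ) ^ 2 * Real.log a := by gcongr; linarith
    nlinarith
  set x := 0.12 * s / k with hx
  have hxk : x * k = 0.12 * s := by rw [hx]; field_simp
  have hxpos : 0 < x := by positivity
  set b := ⌈x⌉₊ with hb
  have hb1 : 1 ≤ b := Nat.ceil_pos.2 hxpos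
  have hbx : x ≤ b := Nat.le_ceil x
  have hbx' : (b : ℝ) < x + 1 := Nat.ceil_lt_add_one hxpos.le
  have hkb : (k : ℝ) * b ^ 2 ≤ 0.9 * q := by
    have h1 : x * x * k ≤ 0.04 * q := by
      have : x * x * k * k ≤ 0.04 * q * k := by
        have e : x * x * k * k = 0.0144 * (q * Real.log a) := by
          rw [← hs2]
          linear_combination (x * k + 0.12 * s) * hxk
        rw [e]
        nlinarith
      exact le_of_mul_le_mul_right this (by linarith)
    calc (k : ℝ) * b ^ 2 ≤ k * (x + 1) ^ 2 := by gcongr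
      _ = x * x * k + 2 * (x * k) + k := by ring
      _ ≤ 0.9 * q := by rw [hxk]; linarith
  rcases hf.sum_ge (by omega) k b hk hb1 with h | h
  · have hR : 3 * (q : ℝ) ≤ ((∑ v, f v : ℕ) : ℝ) + k * b ^ 2 := by exact_mod_cast h
    linarith
  · have h1 : a * (k * b) ≤ 2 * ((a + 1 - 2 ^ k) * (k * b)) := by
      rw [← mul_assoc 2]
      gcongr
      omega
    have h2 : 4 * q + a * (k * b) ≤ 2 * ∑ v, f v := by omega
    have hR : 4 * (q : ℝ) + a * (k * b) ≤ 2 * ((∑ v, f v : ℕ) : ℝ) := by exact_mod_cast h2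
    have h3 : (a : ℝ) * (0.12 * s) ≤ a * (k * b) := by
      rw [← hxk, mul_comm x]
      gcongr
    linarith
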